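/- Let p be a prime with p ≡ 3 (mod 4). Then T(p) > 0 if p ≡ 3 (mod 8), and T(p) < 0 if p ≡ 7 (mod 8). -/

import Mathlib

/-- `T p = √p ∑_{n=1}^{(p-1)/2} tan(π n² / p)`. -/
noncomputable def T (p : ℕ) : ℝ :=
  Real.sqrt p * ∑ n ∈ Finset.Icc 1 ((p - 1) / 2), Real.tan (Real.pi * (n : ℝ) ^ 2 / p)

open Filter Topology

lemma rpow_diff_aux {x y s : ℝ} (hx : 1 ≤ x) (hxy : x ≤ y) (h1 : 1 ≤ s) (h2 : s ≤ 2) :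
    |x ^ (-s) - y ^ (-s)| ≤ 2 * (y - x) / (x * y) := by
  have hx0 : 0 < x := by linarith
  have hy0 : 0 < y := by linarith
  have hle : y ^ (-s) ≤ x ^ (-s) := Real.rpow_le_rpow_of_nonpos hx0 hxy (by linarith)
  rw [abs_of_nonneg (by linarith)]
  have e : y ^ (-s) = x ^ (-s) * (x / y) ^ s := by
    rw [Real.div_rpow hx0.le hy0.le, Real.rpow_neg hx0.le, Real.rpow_neg hy0.le]
    have := (Real.rpow_pos_of_pos hx0 s).ne'
    field_simp
  have hq : (x / y) ^ (2 : ℝ) ≤ (x / y) ^ s :=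
    Real.rpow_le_rpow_of_exponent_ge (by positivity) (by rw [div_le_one hy0]; exact hxy) h2
  have hxs : x ^ (-s) ≤ x ^ (-1 : ℝ) :=
    Real.rpow_le_rpow_of_exponent_le hx (by linarith)
  rw [Real.rpow_neg_one] at hxs
  rw [Real.rpow_two] at hq
  have hq1 : (x / y) ^ 2 ≤ 1 := by
    apply pow_le_one₀ (by positivity); rw [div_le_one hy0]; exact hxy
  calc x ^ (-s) - y ^ (-s) = x ^ (-s) * (1 - (x / y) ^ s) := by rw [e]; ring
    _ ≤ x ^ (-s) * (1 - (x / y) ^ 2) := by gcongr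
    _ ≤ x⁻¹ * (1 - (x / y) ^ 2) := by
        apply mul_le_mul_of_nonneg_right hxs; linarith
    _ ≤ 2 * (y - x) / (x * y) := by
        rw [← sub_nonneg]
        have : 2 * (y - x) / (x * y) - x⁻¹ * (1 - (x / y) ^ 2) = (y - x) ^ 2 / (x * y ^ 2) := by
          field_simp; ring
        rw [this]; positivity

lemma rpow_diff_bound {x y s d m : ℝ} (hm : 0 ≤ m) (hx : m + 1 ≤ x) (hy : m + 1 ≤ y)
    (hd : |x - y| ≤ d) (h1 : 1 ≤ s) (h2 : s ≤ 2) :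
    |x ^ (-s) - y ^ (-s)| ≤ 2 * d * (1 / (m + 1) ^ 2) := by
  wlog h : x ≤ y generalizing x y
  · rw [abs_sub_comm]
    exact this hy hx (by rwa [abs_sub_comm]) (by linarith)
  refine (rpow_diff_aux (by linarith) h h1 h2).trans ?_
  have : y - x ≤ d := by rw [abs_sub_comm, abs_of_nonneg (by linarith)] at hd; exact hd
  have hd0 : 0 ≤ d := (abs_nonneg _).trans hd
  rw [mul_one_div]
  have : (m + 1) ^ 2 ≤ x * y := by rw [pow_two]; gcongr; linarith
  gcongr

lemma summable_bd (d : ℝ) : Summable (fun m : ℕ => 2 * d * (1 / ((m : ℝ) + 1) ^ 2)) := by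
  apply Summable.mul_left
  have := (summable_nat_add_iff 1).2 (Real.summable_one_div_nat_pow.2 (one_lt_two))
  simpa using this

lemma term_bound {p a : ℕ} (ha : 0 < a) (hap : a < p) {s : ℝ} (h1 : 1 ≤ s) (h2 : s ≤ 2) (m : ℕ) :
    |((a : ℝ) + p * m) ^ (-s) - ((p - a : ℝ) + p * m) ^ (-s)| ≤ 2 * p * (1 / ((m : ℝ) + 1) ^ 2) := by
  have ha' : (1 : ℝ) ≤ a := by exact_mod_cast ha
  have hap' : (a : ℝ) + 1 ≤ p := by exact_mod_cast hap
  have hm : (0 : ℝ) ≤ m := by positivity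
  apply rpow_diff_bound hm _ _ _ h1 h2
  · nlinarith
  · nlinarith
  · rw [abs_le]; constructor <;> linarith

lemma cot_tsum {p a : ℕ} (ha : 0 < a) (hap : a < p) :
    ∑' m : ℕ, (((a : ℝ) + p * m) ^ (-1 : ℝ) - ((p - a : ℝ) + p * m) ^ (-1 : ℝ)) =
      Real.pi / p * Real.cot (Real.pi * a / p) := by
  have ha' : (1 : ℝ) ≤ a := by exact_mod_cast ha
  have hap' : (a : ℝ) + 1 ≤ p := by exact_mod_cast hap
  have hp0 : (0 : ℝ) < p := by linarith
  have hs : Summable fun m : ℕ =>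
      (((a : ℝ) + p * m) ^ (-1 : ℝ) - ((p - a : ℝ) + p * m) ^ (-1 : ℝ)) := by
    apply Summable.of_norm_bounded (summable_bd p)
    intro m
    exact term_bound ha hap le_rfl one_le_two m
  apply HasSum.tsum_eq
  rw [hs.hasSum_iff_tendsto_nat]
  set x : ℝ := a / p with hx
  have hx0 : 0 < x := by positivity
  have hx1 : x < 1 := by rw [hx, div_lt_one hp0]; linarith
  have hxm : (x : ℂ) ∈ Complex.integerComplement := by
    rintro ⟨n, hn⟩
    have hn' : (n : ℝ) = x := by exact_mod_cast hn
    rw [← hn'] at hx0 hx1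
    have h0 : (0 : ℤ) < n := by exact_mod_cast hx0
    have h1 : n < (1 : ℤ) := by exact_mod_cast hx1
    omega
  have key := tendsto_logDeriv_euler_cot_sub hxm
  have key' : Tendsto (fun N : ℕ => ∑ j ∈ Finset.range N, (1 / (x - (j + 1)) + 1 / (x + (j + 1))))
      atTop (𝓝 (Real.pi * Real.cot (Real.pi * x) - 1 / x)) := by
    have := (Complex.continuous_re.tendsto _).comp key
    convert! this using 1
    · ext N
      simp only [Function.comp, cotTerm]
      rw [← Complex.ofReal_re (∑ j ∈ Finset.range N, (1 / (x - (j + 1)) + 1 / (x + (j + 1))))]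
      push_cast
      rfl
    · congr 1
      rw [← Complex.ofReal_re (Real.pi * Real.cot (Real.pi * x) - 1 / x)]
      push_cast
      rfl
  have hz : Tendsto (fun N : ℕ => 1 / (x + N)) atTop (𝓝 0) := by
    have : Tendsto (fun N : ℕ => x + (N : ℝ)) atTop atTop :=
      tendsto_atTop_add_const_left _ _ tendsto_natCast_atTop_atTop
    have h := this.inv_tendsto_atTop
    simp only [one_div]
    exact h
  have k2 := ((key'.sub hz).add_const (1 / x)).const_mul (1 / (p : ℝ))
  have : 1 / (p : ℝ) * (Real.pi * Real.cot (Real.pi * x) - 1 / x - 0 + 1 / x) =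
      Real.pi / p * Real.cot (Real.pi * a / p) := by
    rw [hx, mul_div_assoc]; ring
  rw [this] at k2
  refine k2.congr ?_
  intro N
  induction N with
  | zero => simp
  | succ N ih =>
    rw [Finset.sum_range_succ, Finset.sum_range_succ, ← ih]
    have e1 : x + N ≠ 0 := by positivity
    have e2 : x + (N + 1) ≠ 0 := by positivity
    have hN : (0 : ℝ) ≤ N := by positivity
    have e3 : x - (N + 1) ≠ 0 := by linarith
    have f1 : (a : ℝ) + p * N = p * (x + N) := by rw [hx]; field_simp
    have f2 : (p - a : ℝ) + p * N = -(p * (x - (N + 1))) := by rw [hx]; field_simp; ring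
    rw [f1, f2, Real.rpow_neg_one, Real.rpow_neg_one, inv_neg, mul_inv, mul_inv]
    push_cast
    simp only [one_div]
    ring

lemma tsum_tendsto {p a : ℕ} (ha : 0 < a) (hap : a < p) :
    Tendsto (fun s : ℝ => ∑' m : ℕ, (((a : ℝ) + p * m) ^ (-s) - ((p - a : ℝ) + p * m) ^ (-s)))
      (𝓝[>] 1) (𝓝 (Real.pi / p * Real.cot (Real.pi * a / p))) := by
  have ha' : (1 : ℝ) ≤ a := by exact_mod_cast ha
  have hap' : (a : ℝ) + 1 ≤ p := by exact_mod_cast hap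
  rw [← cot_tsum ha hap]
  apply tendsto_tsum_of_dominated_convergence (summable_bd p)
  · intro m
    have hm : (0 : ℝ) ≤ p * m := by positivity
    apply Tendsto.mono_left _ nhdsWithin_le_nhds
    have : ContinuousAt (fun s : ℝ =>
      (((a : ℝ) + p * m) ^ (-s) - ((p - a : ℝ) + p * m) ^ (-s))) 1 := by
      apply ContinuousAt.sub
      · exact ContinuousAt.rpow continuousAt_const continuousAt_neg (Or.inl (by linarith))
      · exact ContinuousAt.rpow continuousAt_const continuousAt_neg (Or.inl (by linarith))
    exact this
  · have : Set.Ioc (1 : ℝ) 2 ∈ 𝓝[>] (1 : ℝ) := Ioc_mem_nhdsGT one_lt_two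
    filter_upwards [this] with s hs m
    exact term_bound ha hap hs.1.le hs.2 m

noncomputable def qc (p : ℕ) [Fact p.Prime] (a : ZMod p) : ℝ := (quadraticChar (ZMod p) a : ℤ)

noncomputable def FF (p : ℕ) [Fact p.Prime] (s : ℝ) : ℝ := ∑' n : ℕ, qc p n * (n : ℝ) ^ (-s)

section
variable {p : ℕ} [hF : Fact p.Prime]

lemma qc_zero : qc p 0 = 0 := by simp [qc]

lemma qc_abs (a : ZMod p) : |qc p a| ≤ 1 := by
  by_cases h : a = 0
  · simp [h, qc_zero]
  · rcases quadraticChar_dichotomy h with h | h <;> simp [qc, h]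

lemma qc_neg (h3 : p % 4 = 3) (a : ZMod p) : qc p (-a) = - qc p a := by
  have h1 : quadraticChar (ZMod p) (-1) = -1 := by
    rw [quadraticChar_neg_one_iff_not_isSquare, ZMod.exists_sq_eq_neg_one_iff]
    simpa using h3
  have : quadraticChar (ZMod p) (-a) = - quadraticChar (ZMod p) a := by
    rw [← neg_one_mul, map_mul, h1]; ring
  simp [qc, this]

lemma FF_summable {s : ℝ} (hs : 1 < s) : Summable fun n : ℕ => qc p n * (n : ℝ) ^ (-s) := by
  apply Summable.of_norm_bounded (Real.summable_nat_rpow.2 (show -s < -1 by linarith))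
  intro n
  have h0 : (0 : ℝ) ≤ (n : ℝ) ^ (-s) := by positivity
  rw [norm_mul, Real.norm_eq_abs, Real.norm_of_nonneg h0]
  exact mul_le_of_le_one_left h0 (qc_abs _)

lemma class_summable {s : ℝ} (hs : 1 < s) (a : ℕ) :
    Summable fun m : ℕ => ((a : ℝ) + p * m) ^ (-s) := by
  have h := (Real.summable_nat_rpow.2 (show -s < -1 by linarith))
  have hi : Function.Injective (fun m : ℕ => a + p * m) := by
    intro m n h
    have := hF.out.pos
    simpa [this.ne'] using h
  have := h.comp_injective hi
  simpa [Function.comp_def] using this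

lemma FF_classes {s : ℝ} (hs : 1 < s) :
    FF p s = ∑ j : ZMod p, qc p j * ∑' m : ℕ, ((j.val : ℝ) + p * m) ^ (-s) := by
  rw [FF, Nat.sumByResidueClasses (FF_summable hs) p]
  refine Finset.sum_congr rfl fun j _ => ?_
  rw [← tsum_mul_left]
  refine tsum_congr fun m => ?_
  simp

lemma FF_two (h3 : p % 4 = 3) {s : ℝ} (hs : 1 < s) :
    2 * FF p s = ∑ j : ZMod p, qc p j *
      ∑' m : ℕ, (((j.val : ℝ) + p * m) ^ (-s) - ((p - j.val : ℝ) + p * m) ^ (-s)) := by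
  have h1 := FF_classes (p := p) hs
  have h2 := h1
  rw [← Equiv.sum_comp (Equiv.neg (ZMod p))] at h2
  rw [two_mul]
  nth_rw 1 [h1]
  rw [h2, ← Finset.sum_add_distrib]
  refine Finset.sum_congr rfl fun j _ => ?_
  by_cases hj : j = 0
  · simp [hj, qc_zero]
  · have hv : ((-j).val : ℝ) = p - j.val := by
      have : NeZero j := ⟨hj⟩
      rw [ZMod.val_neg_of_ne_zero, Nat.cast_sub (ZMod.val_lt j).le]
    have s1 := class_summable (p := p) hs j.val
    have s2 := class_summable (p := p) hs (-j).val
    rw [hv] at s2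
    rw [Summable.tsum_sub s1 s2]
    simp only [Equiv.neg_apply, hv, qc_neg h3]
    ring

noncomputable def SS (p : ℕ) [Fact p.Prime] : ℝ :=
  ∑ j : ZMod p, qc p j * Real.cot (Real.pi * j.val / p)

lemma FF_tendsto (h3 : p % 4 = 3) : Tendsto (FF p) (𝓝[>] 1) (𝓝 (Real.pi / (2 * p) * SS p)) := by
  have h : Tendsto (fun s : ℝ => 1 / 2 * ∑ j : ZMod p, qc p j *
      ∑' m : ℕ, (((j.val : ℝ) + p * m) ^ (-s) - ((p - j.val : ℝ) + p * m) ^ (-s)))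
      (𝓝[>] 1) (𝓝 (1 / 2 * ∑ j : ZMod p, qc p j *
        (Real.pi / p * Real.cot (Real.pi * j.val / p)))) := by
    apply Tendsto.const_mul
    apply tendsto_finsetSum
    intro j _
    by_cases hj : j = 0
    · simp [hj, qc_zero]
    · apply Tendsto.const_mul
      exact tsum_tendsto (Nat.pos_of_ne_zero (by simpa using hj)) (ZMod.val_lt j)
  have e : (1 / 2 * ∑ j : ZMod p, qc p j *
        (Real.pi / p * Real.cot (Real.pi * j.val / p))) = Real.pi / (2 * p) * SS p := by
    rw [SS, Finset.mul_sum, Finset.mul_sum]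
    refine Finset.sum_congr rfl fun j _ => ?_
    have := hF.out.pos
    field_simp
  rw [e] at h
  refine h.congr' ?_
  filter_upwards [self_mem_nhdsWithin] with s hs
  rw [← FF_two h3 hs]; ring

noncomputable def chiC (p : ℕ) [Fact p.Prime] : DirichletCharacter ℂ p :=
  (quadraticChar (ZMod p)).ringHomComp (Int.castRingHom ℂ)

lemma chiC_apply (a : ZMod p) : chiC p a = (qc p a : ℂ) := by
  simp [chiC, qc]

lemma chiC_ne_one (h3 : p % 4 = 3) : chiC p ≠ 1 := by
  intro h
  have h1 : chiC p (-1) = 1 := by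
    rw [h]; exact MulChar.one_apply (isUnit_one.neg)
  rw [chiC_apply, qc_neg h3] at h1
  norm_num [qc] at h1

lemma LF_eq {s : ℝ} (hs : 1 < s) : (chiC p).LFunction s = (FF p s : ℂ) := by
  rw [DirichletCharacter.LFunction_eq_LSeries _ (by simpa using hs), LSeries, FF, Complex.ofReal_tsum]
  refine tsum_congr fun n => ?_
  rcases eq_or_ne n 0 with rfl | hn
  · simp [qc_zero]
  · rw [LSeries.term_of_ne_zero hn, chiC_apply, Complex.ofReal_mul,
      Complex.ofReal_cpow (by positivity), Complex.ofReal_neg, Complex.cpow_neg, div_eq_mul_inv]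
    simp

lemma FF_two_pos : 0 < FF p 2 := by
  have hs : Summable fun n : ℕ => qc p n * (n : ℝ) ^ (-(2 : ℝ)) := FF_summable one_lt_two
  have hz := hasSum_zeta_two
  -- compare f n + 1/n^2 with the n = 1 term
  have hnn : ∀ n : ℕ, 0 ≤ qc p n * (n : ℝ) ^ (-(2 : ℝ)) + 1 / (n : ℝ) ^ 2 := by
    intro n
    have : (n : ℝ) ^ (-(2 : ℝ)) = 1 / (n : ℝ) ^ 2 := by
      rw [Real.rpow_neg (by positivity), Real.rpow_two, one_div]
    rw [this]
    have h1 := (abs_le.1 (qc_abs (n : ZMod p))).1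
    have h2 : (0 : ℝ) ≤ 1 / (n : ℝ) ^ 2 := by positivity
    nlinarith
  have h := (hs.add hz.summable).le_tsum 1 (fun j _ => hnn j)
  rw [hs.tsum_add hz.summable, hz.tsum_eq] at h
  have h1 : qc p ((1 : ℕ) : ZMod p) = 1 := by simp [qc]
  rw [h1] at h
  norm_num at h
  have h' : 2 ≤ FF p 2 + Real.pi ^ 2 / 6 := by simpa [FF] using h
  have := Real.pi_lt_d2
  have := Real.pi_pos
  nlinarith

lemma SS_pos (h3 : p % 4 = 3) : 0 < SS p := by
  have hp0 : (0 : ℝ) < p := by exact_mod_cast hF.out.pos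
  have hcont : Continuous (fun s : ℝ => (chiC p).LFunction s) :=
    (DirichletCharacter.differentiable_LFunction (chiC_ne_one h3)).continuous.comp
      Complex.continuous_ofReal
  set v : ℝ := Real.pi / (2 * p) * SS p with hv
  have h1 : (chiC p).LFunction ((1 : ℝ) : ℂ) = (v : ℂ) := by
    have t1 : Tendsto (fun s : ℝ => (chiC p).LFunction s) (𝓝[>] 1)
        (𝓝 ((chiC p).LFunction ((1 : ℝ) : ℂ))) :=
      (hcont.tendsto 1).mono_left nhdsWithin_le_nhds
    have t2 : Tendsto (fun s : ℝ => (FF p s : ℂ)) (𝓝[>] 1) (𝓝 (v : ℂ)) :=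
      (Complex.continuous_ofReal.tendsto _).comp (FF_tendsto h3)
    refine tendsto_nhds_unique t1 (t2.congr' ?_)
    filter_upwards [self_mem_nhdsWithin] with s hs
    exact (LF_eq hs).symm
  have him : ∀ s : ℝ, 1 ≤ s → ((chiC p).LFunction s).im = 0 := by
    intro s hs
    rcases hs.eq_or_lt with rfl | hs
    · rw [h1]; simp
    · rw [LF_eq hs]; simp
  have hne : ∀ s : ℝ, 1 ≤ s → ((chiC p).LFunction s).re ≠ 0 := by
    intro s hs h
    exact DirichletCharacter.LFunction_ne_zero_of_one_le_re (chiC p) (.inl (chiC_ne_one h3))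
      (s := (s : ℂ)) (by simpa using hs) (Complex.ext h (him s hs))
  have hvpos : 0 < v := by
    by_contra hneg
    have hc : ContinuousOn (fun s : ℝ => ((chiC p).LFunction s).re) (Set.Icc 1 2) :=
      (Complex.continuous_re.comp hcont).continuousOn
    have hiv := intermediate_value_Icc (show (1 : ℝ) ≤ 2 by norm_num) hc
    have : (0 : ℝ) ∈ Set.Icc (((chiC p).LFunction ((1 : ℝ) : ℂ)).re)
        (((chiC p).LFunction ((2 : ℝ) : ℂ)).re) := by
      rw [h1, LF_eq one_lt_two]
      exact ⟨by simpa using hneg, by simpa using FF_two_pos.le⟩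
    obtain ⟨s, hs, h0⟩ := hiv this
    exact hne s hs.1 h0
  have := Real.pi_pos
  exact (pos_iff_pos_of_mul_pos hvpos).1 (by positivity)

lemma periodic_natCast {f : ℝ → ℝ} (hf : Function.Periodic f Real.pi) (k : ℕ) :
    f (Real.pi * ((k : ZMod p).val : ℕ) / p) = f (Real.pi * k / p) := by
  have hp0 : (p : ℝ) ≠ 0 := by exact_mod_cast hF.out.ne_zero
  rw [ZMod.val_natCast]
  have h : (k : ℝ) = (k % p : ℕ) + p * (k / p : ℕ) := by exact_mod_cast (Nat.mod_add_div k p).symm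
  have : Real.pi * k / p = Real.pi * (k % p : ℕ) / p + (k / p : ℕ) * Real.pi := by
    rw [h]; field_simp
  rw [this, hf.nat_mul]

lemma tan_per : Function.Periodic Real.tan Real.pi := Real.tan_periodic

lemma cot_per : Function.Periodic Real.cot Real.pi := by
  intro x
  rw [Real.cot_eq_cos_div_sin, Real.cot_eq_cos_div_sin, Real.cos_add_pi, Real.sin_add_pi, neg_div_neg_eq]

noncomputable def tz (p : ℕ) (a : ZMod p) : ℝ := Real.tan (Real.pi * (a.val : ℝ) / p)

lemma tz_neg (a : ZMod p) : tz p (-a) = - tz p a := by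
  by_cases ha : a = 0
  · simp [ha, tz]
  · have : NeZero a := ⟨ha⟩
    have hp0 : (p : ℝ) ≠ 0 := by exact_mod_cast hF.out.ne_zero
    rw [tz, ZMod.val_neg_of_ne_zero, Nat.cast_sub (ZMod.val_lt a).le, tz]
    rw [show Real.pi * ((p : ℝ) - a.val) / p = Real.pi - Real.pi * a.val / p by field_simp]
    rw [Real.tan_pi_sub]

lemma sum_tz : ∑ a : ZMod p, tz p a = 0 := by
  have h := Equiv.sum_comp (Equiv.neg (ZMod p)) (tz p)
  simp only [Equiv.neg_apply, tz_neg, Finset.sum_neg_distrib] at h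
  linarith

lemma sum_sq (h2 : p ≠ 2) : ∑ n : ZMod p, tz p (n ^ 2) = ∑ a : ZMod p, qc p a * tz p a := by
  have hr : ringChar (ZMod p) ≠ 2 := by rwa [ZMod.ringChar_zmod_n]
  rw [← Finset.sum_fiberwise (s := Finset.univ) (g := fun n : ZMod p => n ^ 2)]
  have : ∀ a : ZMod p, ∑ n with n ^ 2 = a, tz p (n ^ 2) = (qc p a + 1) * tz p a := by
    intro a
    rw [Finset.sum_congr rfl (g := fun _ => tz p a) (fun n hn => by
      rw [(Finset.mem_filter.1 hn).2])]
    rw [Finset.sum_const, nsmul_eq_mul]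
    congr 1
    have := quadraticChar_card_sqrts hr a
    rw [qc, ← Int.cast_one, ← Int.cast_add, ← this]
    simp
  simp_rw [this, add_mul, one_mul, Finset.sum_add_distrib, sum_tz, add_zero]

lemma sum_half (h2 : p % 2 = 1) : ∑ n : ZMod p, tz p (n ^ 2) =
    2 * ∑ n ∈ Finset.Icc 1 ((p - 1) / 2), Real.tan (Real.pi * (n : ℝ) ^ 2 / p) := by
  have hpos := hF.out.pos
  have e1 : ∑ n : ZMod p, tz p (n ^ 2) = ∑ k ∈ Finset.range p, tz p ((k : ZMod p) ^ 2) := by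
    symm
    refine Finset.sum_bij' (fun k _ => (k : ZMod p)) (fun n _ => n.val) ?_ ?_ ?_ ?_ ?_
    · intros; simp
    · intro a _; simpa using ZMod.val_lt a
    · intro a ha; exact ZMod.val_cast_of_lt (by simpa using ha)
    · intros; simp
    · intros; rfl
  rw [e1]
  obtain ⟨h, hh⟩ : ∃ h, p = 2 * h + 1 := ⟨p / 2, by omega⟩
  have e2 : (p - 1) / 2 = h := by omega
  rw [e2]
  have e3 : ∀ n : ℕ, Real.tan (Real.pi * (n : ℝ) ^ 2 / p) = tz p ((n : ZMod p) ^ 2) := by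
    intro n
    have := periodic_natCast (p := p) tan_per (n ^ 2)
    rw [tz]
    push_cast at this
    exact this.symm
  simp_rw [e3]
  have e4 : Finset.range p = insert 0 (Finset.Icc 1 h ∪ Finset.Icc (h + 1) (2 * h)) := by
    ext x; simp; omega
  rw [e4, Finset.sum_insert (by simp), Finset.sum_union]
  · have e5 : ∑ x ∈ Finset.Icc (h + 1) (2 * h), tz p ((x : ZMod p) ^ 2) =
        ∑ x ∈ Finset.Icc 1 h, tz p ((x : ZMod p) ^ 2) := by
      have hsq : ∀ x : ℕ, x ≤ p → (((p - x : ℕ) : ZMod p)) ^ 2 = (x : ZMod p) ^ 2 := by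
        intro x hx
        rw [Nat.cast_sub hx]; simp
      refine Finset.sum_bij' (fun k _ => p - k) (fun k _ => p - k) ?_ ?_ ?_ ?_ ?_
      · intro a ha; simp at ha ⊢; omega
      · intro a ha; simp at ha ⊢; omega
      · intro a ha; simp at ha ⊢; omega
      · intro a ha; simp at ha ⊢; omega
      · intro a ha; simp at ha; rw [hsq a (by omega)]
    rw [e5]
    simp [tz]; ring
  · rw [Finset.disjoint_left]; intro a ha hb; simp at ha hb; omega

lemma tan_eq_cot {x : ℝ} (hs : Real.sin x ≠ 0) (hc : Real.cos x ≠ 0) :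
    Real.tan x = Real.cot x - 2 * Real.cot (2 * x) := by
  rw [Real.tan_eq_sin_div_cos, Real.cot_eq_cos_div_sin, Real.cot_eq_cos_div_sin, Real.sin_two_mul,
    Real.cos_two_mul']
  field_simp
  ring

lemma qc_mul (a b : ZMod p) : qc p (a * b) = qc p a * qc p b := by
  rw [qc, map_mul, Int.cast_mul]; rfl

lemma two_ne (h2 : p % 2 = 1) : (2 : ZMod p) ≠ 0 := by
  intro h
  have : ((2 : ℕ) : ZMod p) = 0 := by exact_mod_cast h
  rw [ZMod.natCast_eq_zero_iff] at this
  have := Nat.le_of_dvd (by norm_num) this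
  have := hF.out.two_le
  omega

lemma sum_qc_tz (h2 : p % 2 = 1) : ∑ a : ZMod p, qc p a * tz p a = (1 - 2 * qc p 2) * SS p := by
  have hp0 : (0 : ℝ) < p := by exact_mod_cast hF.out.pos
  have h20 := two_ne (p := p) h2
  have hq2 : qc p 2 * qc p 2 = 1 := by
    have := quadraticChar_sq_one h20
    rw [qc, ← Int.cast_mul, ← pow_two, this]; simp
  have e1 : SS p = ∑ a : ZMod p, qc p 2 * (qc p a * Real.cot (2 * (Real.pi * a.val / p))) := by
    rw [SS, ← Equiv.sum_comp (Equiv.mulLeft₀ (2 : ZMod p) h20)]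
    refine Finset.sum_congr rfl fun a _ => ?_
    have := periodic_natCast (p := p) cot_per (2 * a.val)
    rw [show (Equiv.mulLeft₀ (2 : ZMod p) h20) a = 2 * a from rfl, qc_mul, mul_assoc]
    congr 2
    push_cast at this
    rw [ZMod.natCast_zmod_val] at this
    rw [this]
    congr 1; ring
  have e2 : qc p 2 * SS p = ∑ a : ZMod p, qc p a * Real.cot (2 * (Real.pi * a.val / p)) := by
    rw [e1, ← Finset.mul_sum, ← mul_assoc, hq2, one_mul]
  have e3 : (1 - 2 * qc p 2) * SS p = SS p - 2 * (qc p 2 * SS p) := by ring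
  rw [e3, e2, SS, Finset.mul_sum, ← Finset.sum_sub_distrib]
  refine Finset.sum_congr rfl fun a _ => ?_
  by_cases ha : a = 0
  · simp [ha, qc_zero]
  · have hv0 : 0 < a.val := Nat.pos_of_ne_zero (by simpa using ha)
    have hv1 := ZMod.val_lt a
    have hv0' : (0 : ℝ) < a.val := by exact_mod_cast hv0
    have hv1' : (a.val : ℝ) < p := by exact_mod_cast hv1
    have hpi := Real.pi_pos
    have hs : Real.sin (Real.pi * a.val / p) ≠ 0 := by
      apply ne_of_gt
      apply Real.sin_pos_of_pos_of_lt_pi (by positivity)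
      rw [div_lt_iff₀ hp0]; gcongr
    have hc : Real.cos (Real.pi * a.val / p) ≠ 0 := by
      rw [Real.cos_ne_zero_iff]
      intro k hk
      field_simp at hk
      have : (2 * (a.val : ℤ)) = p * (2 * k + 1) := by
        have h' : (2 * (a.val : ℝ)) = p * (2 * k + 1) := by linarith
        exact_mod_cast h'
      have h'' : (2 * (a.val : ℤ)) % 2 = (p * (2 * k + 1) : ℤ) % 2 := by rw [this]
      rw [Int.mul_emod (p : ℤ)] at h''
      have hp2 : (p : ℤ) % 2 = 1 := by exact_mod_cast h2
      have hk2 : (2 * k + 1) % 2 = 1 := by omega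
      rw [hp2, hk2] at h''
      simp at h''
    rw [tz, tan_eq_cot hs hc]
    ring

end

theorem T_sign (p : ℕ) (hp : p.Prime) (h3 : p % 4 = 3) :
    (p % 8 = 3 → T p > 0) ∧ (p % 8 = 7 → T p < 0) := by
  have : Fact p.Prime := ⟨hp⟩
  have hodd : p % 2 = 1 := by omega
  have hp2 : p ≠ 2 := by omega
  have hS := SS_pos (p := p) h3
  have hsq : 0 < Real.sqrt p := Real.sqrt_pos.2 (by exact_mod_cast hp.pos)
  have key := (sum_half (p := p) hodd).symm.trans ((sum_sq hp2).trans (sum_qc_tz hodd))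
  constructor
  · intro h
    have h2 : qc p 2 = -1 := by
      have : quadraticChar (ZMod p) 2 = -1 := by
        rw [quadraticChar_neg_one_iff_not_isSquare, ZMod.exists_sq_eq_two_iff hp2]; omega
      simp [qc, this]
    rw [h2] at key
    exact mul_pos hsq (by linarith)
  · intro h
    have h2 : qc p 2 = 1 := by
      have : quadraticChar (ZMod p) 2 = 1 := by
        rw [quadraticChar_one_iff_isSquare (two_ne hodd), ZMod.exists_sq_eq_two_iff hp2]; omega
      simp [qc, this]
    rw [h2] at key
    exact mul_neg_of_pos_of_neg hsq (by linarith)
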